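/- arXiv:1609.07031 — 4 statements merged into one kernel-verified Lean document; each statement's English description precedes it below -/
import Mathlib

section
/- Let H be a real Hilbert space with more than one element, let c ∈ [1,∞), n ∈ ℕ₀, x,y ∈ H, and V ∈ 𝒞^{n+1}_c(H,[0,∞)). Then (i) for every t ∈ [0,1] at which the function s ↦ V(x+sy) is differentiable it holds that |(d/dt)V(x+ty)| ≤ c‖y‖_H (1+V(x+ty))^{1−1/c}, and (ii) for every i ∈ {1,…,n}, all z₁,…,z_i ∈ H, and every t ∈ [0,1] at which s ↦ V^{(i)}(x+sy)(z₁,…,z_i) is differentiable it holds that |(d/dt)(V^{(i)}(x+ty)(z₁,…,z_i))| ≤ c‖z₁‖_H⋯‖z_i‖_H ‖y‖_H (1+V(x+ty))^{1−1/c}. -/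
/-- Let `H` be a nontrivial real Hilbert space, `c ∈ [1,∞)`, `n ∈ ℕ₀`,
`x, y ∈ H`, and `V ∈ 𝒞^{n+1}_c(H,[0,∞))`.  Then (i) for every `t ∈ [0,1]` at
which `s ↦ V(x+sy)` is differentiable,
`|(d/dt)V(x+ty)| ≤ c‖y‖(1+V(x+ty))^{1−1/c}`, and (ii) for every
`i ∈ {1,…,n}`, all `z₁,…,z_i ∈ H` and every `t ∈ [0,1]` at which
`s ↦ V⁽ⁱ⁾(x+sy)(z₁,…,z_i)` is differentiable,
`|(d/dt)(V⁽ⁱ⁾(x+ty)(z₁,…,z_i))| ≤ c‖z₁‖⋯‖z_i‖‖y‖(1+V(x+ty))^{1−1/c}`. -/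
theorem stmt4 {H : Type*} [NormedAddCommGroup H] [InnerProductSpace ℝ H]
    [Nontrivial H]
    (c : ℝ) (hc : 1 ≤ c) (n : ℕ) (x y : H) (V : H → ℝ)
    (hV0 : ∀ z : H, 0 ≤ V z)
    (hsmooth : ContDiff ℝ n V)
    (hbound : ∀ u v : H, ∀ i : ℕ, i ≤ n →
      ‖iteratedFDeriv ℝ i V u - iteratedFDeriv ℝ i V v‖ ≤
        c * ‖u - v‖ *
          (1 + ⨆ r ∈ Set.Icc (0 : ℝ) 1, |V (r • u + (1 - r) • v)|) ^ (1 - 1 / c)) :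
    (∀ t ∈ Set.Icc (0 : ℝ) 1, DifferentiableAt ℝ (fun s : ℝ => V (x + s • y)) t →
        |deriv (fun s : ℝ => V (x + s • y)) t| ≤
          c * ‖y‖ * (1 + V (x + t • y)) ^ (1 - 1 / c)) ∧
    (∀ i : ℕ, 1 ≤ i → i ≤ n → ∀ z : Fin i → H, ∀ t ∈ Set.Icc (0 : ℝ) 1,
        DifferentiableAt ℝ (fun s : ℝ => iteratedFDeriv ℝ i V (x + s • y) z) t →
        |deriv (fun s : ℝ => iteratedFDeriv ℝ i V (x + s • y) z) t| ≤
          c * (∏ j, ‖z j‖) * ‖y‖ * (1 + V (x + t • y)) ^ (1 - 1 / c)) := by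
  have hVc : Continuous V := hsmooth.continuous
  have hp : 0 ≤ 1 - 1 / c := by
    have : 1 / c ≤ 1 := by
      rw [div_le_one (by linarith)]; exact hc
    linarith
  have key : ∀ i : ℕ, i ≤ n → ∀ z : Fin i → H, ∀ t : ℝ,
      DifferentiableAt ℝ (fun s : ℝ => iteratedFDeriv ℝ i V (x + s • y) z) t →
      |deriv (fun s : ℝ => iteratedFDeriv ℝ i V (x + s • y) z) t| ≤
        c * (∏ j, ‖z j‖) * ‖y‖ * (1 + V (x + t • y)) ^ (1 - 1 / c) := by
    intro i hi z t hd
    have hP : 0 ≤ ∏ j, ‖z j‖ := Finset.prod_nonneg fun j _ => norm_nonneg _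
    have hc0 : 0 ≤ c := by linarith
    have hVt := hV0 (x + t • y)
    have step : ∀ ε : ℝ, 0 < ε →
        |deriv (fun s : ℝ => iteratedFDeriv ℝ i V (x + s • y) z) t| ≤
        c * (∏ j, ‖z j‖) * ‖y‖ * (1 + (V (x + t • y) + ε)) ^ (1 - 1 / c) := by
      intro ε hε
      have hb : 0 ≤ 1 + (V (x + t • y) + ε) := by linarith
      rw [← Real.norm_eq_abs]
      refine hd.hasDerivAt.le_of_lip' (by positivity) ?_
      have hcont : Continuous (fun s : ℝ => V (x + s • y)) := by fun_prop
      obtain ⟨δ, hδ, hδV⟩ := Metric.continuous_iff.1 hcont t ε hε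
      filter_upwards [Metric.ball_mem_nhds t hδ] with s hs
      rw [Metric.mem_ball, Real.dist_eq] at hs
      have hS : (⨆ r ∈ Set.Icc (0 : ℝ) 1,
          |V (r • (x + s • y) + (1 - r) • (x + t • y))|) ≤ V (x + t • y) + ε := by
        refine Real.iSup_le (fun r => Real.iSup_le (fun hr => ?_) (by linarith)) (by linarith)
        have e : r • (x + s • y) + (1 - r) • (x + t • y) = x + (t + r * (s - t)) • y := by
          module
        rw [e, abs_of_nonneg (hV0 _)]
        have h1 := hδV (t + r * (s - t)) (by
          rw [Real.dist_eq, add_sub_cancel_left, abs_mul, abs_of_nonneg hr.1]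
          exact lt_of_le_of_lt (mul_le_of_le_one_left (abs_nonneg _) hr.2) hs)
        rw [Real.dist_eq] at h1
        linarith [(abs_lt.1 h1).2]
      have hS0 : 0 ≤ (⨆ r ∈ Set.Icc (0 : ℝ) 1,
          |V (r • (x + s • y) + (1 - r) • (x + t • y))|) :=
        Real.iSup_nonneg fun r => Real.iSup_nonneg fun _ => abs_nonneg _
      have h2 := hbound (x + s • y) (x + t • y) i hi
      have h3 := (iteratedFDeriv ℝ i V (x + s • y) -
        iteratedFDeriv ℝ i V (x + t • y)).le_opNorm z
      have h4 : ‖x + s • y - (x + t • y)‖ = ‖s - t‖ * ‖y‖ := by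
        rw [← norm_smul]; congr 1; module
      rw [h4] at h2
      have h5 := Real.rpow_le_rpow (by linarith) (add_le_add_right hS 1) hp
      calc _ ≤ _ := h3
        _ ≤ (c * (‖s - t‖ * ‖y‖) * (1 + (V (x + t • y) + ε)) ^ (1 - 1 / c)) *
            ∏ j, ‖z j‖ := by
          refine mul_le_mul_of_nonneg_right (h2.trans ?_) hP
          exact mul_le_mul_of_nonneg_left h5 (by positivity)
        _ = _ := by ring
    have hlim : Filter.Tendsto (fun ε : ℝ =>
        c * (∏ j, ‖z j‖) * ‖y‖ * (1 + (V (x + t • y) + ε)) ^ (1 - 1 / c))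
        (nhdsWithin 0 (Set.Ioi 0))
        (nhds (c * (∏ j, ‖z j‖) * ‖y‖ * (1 + (V (x + t • y) + 0)) ^ (1 - 1 / c))) := by
      refine Filter.Tendsto.mono_left ?_ nhdsWithin_le_nhds
      have : Continuous (fun ε : ℝ =>
          c * (∏ j, ‖z j‖) * ‖y‖ * (1 + (V (x + t • y) + ε)) ^ (1 - 1 / c)) :=
        continuous_const.mul
          (Continuous.rpow_const (by fun_prop) fun _ => Or.inr hp)
      exact this.tendsto 0
    rw [add_zero] at hlim
    refine ge_of_tendsto hlim ?_
    filter_upwards [self_mem_nhdsWithin] with ε hε using step ε hε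
  refine ⟨fun t _ hd => ?_, fun i _ hi z t _ hd => key i hi z t hd⟩
  have h := key 0 (Nat.zero_le _) Fin.elim0 t (by simpa using hd)
  simpa using h
end

section
/- Let H be a real Hilbert space with more than one element, let c ∈ [1,∞), x,y ∈ H, and V ∈ 𝒞¹_c(H,[0,∞)). Then 1 + V(x+y) ≤ 2^{c−1} (1 + V(x) + ‖y‖_H^c). -/
open Filter Topology in
theorem aux_line (c L : ℝ) (hc : 1 ≤ c) (hL : 0 ≤ L) (g : ℝ → ℝ) (hg : Continuous g)
    (hg1 : ∀ t, 1 ≤ g t)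
    (hb : ∀ s t M : ℝ, s < t → (∀ z ∈ Set.Icc s t, g z ≤ M) →
      g t - g s ≤ c * ((t - s) * L) * M ^ (1 - 1 / c)) :
    g 1 ^ (1 / c) ≤ g 0 ^ (1 / c) + L := by
  have hc0 : 0 < c := by linarith
  have hp0 : 0 ≤ 1 / c := by positivity
  have hp1 : 1 / c ≤ 1 := by rw [div_le_one hc0]; exact hc
  have key := image_le_of_liminf_slope_right_le_deriv_boundary (a := 0) (b := 1)
    (f := fun t => g t ^ (1 / c)) (B := fun t => g 0 ^ (1 / c) + L * t) (B' := fun _ => L)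
    ((hg.rpow_const (fun t => Or.inr hp0)).continuousOn) (by simp) (by fun_prop)
    (fun t _ => by
      have h := ((hasDerivAt_id t).const_mul L).const_add (g 0 ^ (1 / c))
      simp only [mul_one] at h
      exact h.hasDerivWithinAt)
    (by
      intro t _ r hr
      apply Eventually.frequently
      have hv : 0 < g t := by linarith [hg1 t]
      have hcM : Tendsto (fun M : ℝ => L * (M / g t) ^ (1 - 1 / c)) (𝓝[>] (g t)) (𝓝 L) := by
        have : Continuous (fun M : ℝ => L * (M / g t) ^ (1 - 1 / c)) :=
          continuous_const.mul ((continuous_id.div_const _).rpow_const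
            (fun _ => Or.inr (by linarith)))
        have h2 := this.tendsto (g t)
        simp only [div_self hv.ne', Real.one_rpow, mul_one] at h2
        exact h2.mono_left nhdsWithin_le_nhds
      obtain ⟨M, hM, hMt⟩ := ((hcM.eventually (gt_mem_nhds hr)).and self_mem_nhdsWithin).exists
      have hMt : g t < M := hMt
      obtain ⟨ε, hε, hball⟩ := Metric.eventually_nhds_iff.1
        ((hg.tendsto t).eventually (gt_mem_nhds hMt))
      filter_upwards [Ioo_mem_nhdsGT (show t < t + ε by linarith)] with z hz
      have hzt : 0 < z - t := by linarith [hz.1]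
      have h1 := hb t z M hz.1 (fun w hw => (hball (by
        rw [Real.dist_eq, abs_lt]; constructor <;> linarith [hw.1, hw.2, hz.2])).le)
      have hbern := rpow_one_add_le_one_add_mul_self (s := g z / g t - 1) (p := 1 / c)
        (by have := hg1 z; have : 0 ≤ g z / g t := by positivity
            linarith) hp0 hp1
      rw [add_sub_cancel, Real.div_rpow (by linarith [hg1 z]) hv.le] at hbern
      have hvp : 0 < g t ^ (1 / c) := Real.rpow_pos_of_pos hv _
      have h2 : g z ^ (1 / c) - g t ^ (1 / c) ≤
          g t ^ (1 / c) * (1 / c * ((g z - g t) / g t)) := by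
        rw [div_le_iff₀ hvp] at hbern
        have : (g z - g t) / g t = g z / g t - 1 := by field_simp
        rw [this]; linarith
      have h3 : g t ^ (1 / c) * (1 / c * ((g z - g t) / g t)) ≤
          g t ^ (1 / c) * (1 / c * ((c * ((z - t) * L) * M ^ (1 - 1 / c)) / g t)) := by
        gcongr
      have h4 : g t ^ (1 / c) * (1 / c * ((c * ((z - t) * L) * M ^ (1 - 1 / c)) / g t)) =
          (z - t) * (L * (M / g t) ^ (1 - 1 / c)) := by
        rw [Real.div_rpow (by linarith) hv.le, Real.rpow_sub hv, Real.rpow_one]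
        field_simp
      rw [slope_def_field, div_lt_iff₀ hzt]
      calc _ ≤ _ := h2.trans h3
        _ = _ := h4
        _ < (z - t) * r := by gcongr
        _ = _ := mul_comm _ _)
  have := key (show (1 : ℝ) ∈ Set.Icc (0 : ℝ) 1 by simp)
  simpa using this


/-- Let `H` be a nontrivial real Hilbert space, `c ∈ [1,∞)`, `x, y ∈ H`, and
`V ∈ 𝒞¹_c(H,[0,∞))`, i.e. `V : H → [0,∞)` is continuous and satisfies
`|V(u) − V(v)| ≤ c‖u−v‖(1 + sup_{r∈[0,1]}|V(ru+(1−r)v)|)^{1−1/c}` for all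
`u,v ∈ H`.  Then `1 + V(x+y) ≤ 2^{c−1}(1 + V(x) + ‖y‖^c)`. -/
theorem stmt5 {H : Type*} [NormedAddCommGroup H] [InnerProductSpace ℝ H]
    [Nontrivial H]
    (c : ℝ) (hc : 1 ≤ c) (x y : H) (V : H → ℝ)
    (hV0 : ∀ z : H, 0 ≤ V z)
    (hcont : Continuous V)
    (hbound : ∀ u v : H,
      |V u - V v| ≤
        c * ‖u - v‖ *
          (1 + ⨆ r ∈ Set.Icc (0 : ℝ) 1, |V (r • u + (1 - r) • v)|) ^ (1 - 1 / c)) :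
    1 + V (x + y) ≤ (2 : ℝ) ^ (c - 1) * (1 + V x + ‖y‖ ^ c) := by
  have hc0 : 0 < c := by linarith
  have hline := aux_line c ‖y‖ hc (norm_nonneg y) (fun t => 1 + V (x + t • y)) (by fun_prop)
    (fun t => by linarith [hV0 (x + t • y)])
    (by
      intro s t M hst hM
      have hM1 : 1 ≤ M := by
        have := hM s ⟨le_rfl, hst.le⟩
        linarith [hV0 (x + s • y)]
      have h := hbound (x + t • y) (x + s • y)
      have hn : ‖(x + t • y) - (x + s • y)‖ = (t - s) * ‖y‖ := by
        rw [add_sub_add_left_eq_sub, ← sub_smul, norm_smul, Real.norm_eq_abs,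
          abs_of_pos (by linarith)]
      rw [hn] at h
      have hnn : 0 ≤ ⨆ r ∈ Set.Icc (0 : ℝ) 1,
          |V (r • (x + t • y) + (1 - r) • (x + s • y))| :=
        Real.iSup_nonneg fun r => Real.iSup_nonneg fun _ => abs_nonneg _
      have hsup : (⨆ r ∈ Set.Icc (0 : ℝ) 1,
          |V (r • (x + t • y) + (1 - r) • (x + s • y))|) ≤ M - 1 := by
        refine Real.iSup_le (fun r => Real.iSup_le (fun hr => ?_) (by linarith)) (by linarith)
        have e : r • (x + t • y) + (1 - r) • (x + s • y) = x + (s + r * (t - s)) • y := by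
          module
        rw [e, abs_of_nonneg (hV0 _)]
        have := hM (s + r * (t - s)) ⟨by nlinarith [hr.1], by nlinarith [hr.2]⟩
        linarith
      have hp1 : 0 ≤ 1 - 1 / c := by
        rw [sub_nonneg, div_le_one hc0]; exact hc
      have hts : 0 ≤ t - s := by linarith
      calc 1 + V (x + t • y) - (1 + V (x + s • y)) = V (x + t • y) - V (x + s • y) := by ring
        _ ≤ _ := (le_abs_self _).trans h
        _ ≤ _ := by
          gcongr
          linarith)
  simp only [one_smul, zero_smul, add_zero] at hline
  have hx : 0 ≤ 1 + V x := by linarith [hV0 x]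
  have hxy : 0 ≤ 1 + V (x + y) := by linarith [hV0 (x + y)]
  have h1 := Real.rpow_le_rpow (Real.rpow_nonneg hxy _) hline hc0.le
  rw [← Real.rpow_mul hxy, one_div_mul_cancel hc0.ne', Real.rpow_one] at h1
  have h2 : ((1 + V x) ^ (1 / c) + ‖y‖) ^ c ≤
      (2 : ℝ) ^ (c - 1) * (((1 + V x) ^ (1 / c)) ^ c + ‖y‖ ^ c) := by
    have h := NNReal.rpow_add_le_mul_rpow_add_rpow
      ⟨(1 + V x) ^ (1 / c), Real.rpow_nonneg hx _⟩ ‖y‖₊ hc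
    exact_mod_cast h
  rw [← Real.rpow_mul hx, one_div_mul_cancel hc0.ne', Real.rpow_one] at h2
  exact h1.trans h2
end

section
/- Let H be a real Hilbert space with more than one element, let c ∈ [1,∞), n ∈ ℕ₀, x,y ∈ H, and V ∈ 𝒞^{n+1}_c(H,[0,∞)). Then max_{i∈{0,1,…,n}} ‖V^{(i)}(x) − V^{(i)}(y)‖_{L^{(i)}(H,ℝ)} ≤ c·2^{c−1}·‖x−y‖_H·(1 + V(x) + ‖x−y‖_H^{c−1}). -/
theorem aux_sup_le {H : Type*} [NormedAddCommGroup H] [InnerProductSpace ℝ H]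
    (V : H → ℝ) (hV0 : ∀ z : H, 0 ≤ V z) (u v : H) (M : ℝ) (hM0 : 0 ≤ M)
    (hM : ∀ r ∈ Set.Icc (0 : ℝ) 1, V (r • u + (1 - r) • v) ≤ M) :
    (⨆ r ∈ Set.Icc (0 : ℝ) 1, |V (r • u + (1 - r) • v)|) ≤ M := by
  refine Real.iSup_le (fun r => Real.iSup_le (fun hr => ?_) hM0) hM0
  rw [abs_of_nonneg (hV0 _)]
  exact hM r hr

theorem aux_sup_nonneg {H : Type*} [NormedAddCommGroup H] [InnerProductSpace ℝ H]
    (V : H → ℝ) (u v : H) :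
    0 ≤ (⨆ r ∈ Set.Icc (0 : ℝ) 1, |V (r • u + (1 - r) • v)|) :=
  Real.iSup_nonneg (fun _ => Real.iSup_nonneg (fun _ => abs_nonneg _))

theorem aux_growth (c d : ℝ) (hc : 1 ≤ c) (hd : 0 ≤ d) (g : ℝ → ℝ) (hg : Continuous g)
    (hg0 : ∀ t, 0 ≤ g t)
    (hb : ∀ s t M : ℝ, s < t → (∀ w ∈ Set.Icc s t, g w ≤ M) →
      g t - g s ≤ c * (d * (t - s)) * (1 + M) ^ (1 - 1 / c)) :
    ∀ t ∈ Set.Icc (0 : ℝ) 1, (1 + g t) ^ (1 / c) ≤ (1 + g 0) ^ (1 / c) + d * t := by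
  have hc0 : 0 < c := by linarith
  have hp1 : 1 / c ≤ 1 := by rw [div_le_one hc0]; exact hc
  have hp0 : 0 ≤ 1 / c := by positivity
  have key := image_le_of_liminf_slope_right_le_deriv_boundary
    (f := fun t => (1 + g t) ^ (1 / c)) (a := 0) (b := 1)
    (B := fun t => (1 + g 0) ^ (1 / c) + d * t) (B' := fun _ => d)
    ((by fun_prop : Continuous fun t => 1 + g t).rpow_const (fun t => Or.inr hp0)).continuousOn
    (by simp) (by fun_prop)
    (fun t _ => by
      have := (((hasDerivAt_id t).const_mul d).const_add ((1 + g 0) ^ (1 / c)))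
      simpa using this.hasDerivWithinAt)
    ?_
  · intro t ht; exact key ht
  intro t ht r hr
  apply Filter.Eventually.frequently
  set A := 1 + g t with hA
  have hApos : 0 < A := by have := hg0 t; linarith
  -- choose room
  have hcont : Filter.Tendsto (fun e : ℝ => d * (A + e) ^ (1 - 1 / c)) (nhds 0)
      (nhds (d * (A + 0) ^ (1 - 1 / c))) := by
    apply Filter.Tendsto.const_mul
    apply Filter.Tendsto.rpow_const
    · exact (continuous_const.add continuous_id).tendsto 0
    · right; linarith
  have hAp : 0 < A ^ (1 - 1 / c) := Real.rpow_pos_of_pos hApos _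
  have hlt : d * (A + 0) ^ (1 - 1 / c) < r * A ^ (1 - 1 / c) := by
    rw [add_zero]; exact mul_lt_mul_of_pos_right hr hAp
  have hev := hcont.eventually (gt_mem_nhds hlt)
  obtain ⟨e, he, hepos⟩ : ∃ e : ℝ, d * (A + e) ^ (1 - 1 / c) < r * A ^ (1 - 1 / c) ∧ 0 < e :=
    ((hev.filter_mono nhdsWithin_le_nhds).and
      (self_mem_nhdsWithin : Set.Ioi (0:ℝ) ∈ nhdsWithin 0 (Set.Ioi 0))).exists
  have hnear := hg.continuousAt (x := t) |>.eventually (gt_mem_nhds (show g t < g t + e by linarith))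
  obtain ⟨δ, hδ, hball⟩ := Metric.eventually_nhds_iff.1 hnear
  have hmem : Set.Ioo t (t + δ) ∈ nhdsWithin t (Set.Ioi t) := Ioo_mem_nhdsGT (by linarith)
  filter_upwards [hmem] with z hz
  have hzt : 0 < z - t := by linarith [hz.1]
  have h1 := hb t z (g t + e) hz.1 (fun w hw => by
    refine (hball ?_).le
    rw [Real.dist_eq, abs_of_nonneg (by linarith [hw.1])]
    linarith [hw.2, hz.2])
  rw [show 1 + (g t + e) = A + e by rw [hA]; ring] at h1
  have h2 := rpow_one_add_le_one_add_mul_self (s := (g z - g t) / A)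
    (by rw [le_div_iff₀ hApos]; linarith [hg0 z]) hp0 hp1
  have h3 : (1 + g z) ^ (1 / c) = A ^ (1 / c) * (1 + (g z - g t) / A) ^ (1 / c) := by
    rw [← Real.mul_rpow hApos.le]
    · congr 1; field_simp; rw [hA]; ring
    · have : 1 + (g z - g t) / A = (1 + g z) / A := by field_simp; rw [hA]; ring
      rw [this]; have := hg0 z; positivity
  have hAc : 0 < A ^ (1 / c) := Real.rpow_pos_of_pos hApos _
  have hsplit : A ^ (1 - 1 / c) * A ^ (1 / c) = A := by
    rw [← Real.rpow_add hApos]; simp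
  rw [slope_def_field, div_lt_iff₀ hzt]
  rw [h3, ← hA]
  have h4 : A ^ (1 / c) * (1 + (g z - g t) / A) ^ (1 / c) - A ^ (1 / c)
      ≤ A ^ (1 / c) * (1 / c * ((g z - g t) / A)) := by
    nlinarith [mul_le_mul_of_nonneg_left h2 hAc.le]
  refine h4.trans_lt ?_
  have h5 : A ^ (1 / c) * (1 / c * ((g z - g t) / A)) = (g z - g t) / (c * A ^ (1 - 1 / c)) := by
    rw [eq_div_iff (by positivity)]
    calc _ = (A ^ (1 - 1 / c) * A ^ (1 / c)) * (c * (1 / c)) * ((g z - g t) / A) := by ring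
      _ = _ := by rw [hsplit]; field_simp
  rw [h5, div_lt_iff₀ (by positivity)]
  calc _ ≤ _ := h1
    _ = (c * (z - t)) * (d * (A + e) ^ (1 - 1 / c)) := by ring
    _ < (c * (z - t)) * (r * A ^ (1 - 1 / c)) := mul_lt_mul_of_pos_left he (by positivity)
    _ = _ := by ring

/-- Let `H` be a nontrivial real Hilbert space, `c ∈ [1,∞)`, `n ∈ ℕ₀`,
`x, y ∈ H`, and `V ∈ 𝒞^{n+1}_c(H,[0,∞))`.  Then for every `i ∈ {0,…,n}` it
holds that
`‖V⁽ⁱ⁾(x) − V⁽ⁱ⁾(y)‖ ≤ c·2^{c−1}·‖x−y‖·(1 + V(x) + ‖x−y‖^{c−1})`. -/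
theorem stmt6 {H : Type*} [NormedAddCommGroup H] [InnerProductSpace ℝ H]
    [Nontrivial H]
    (c : ℝ) (hc : 1 ≤ c) (n : ℕ) (x y : H) (V : H → ℝ)
    (hV0 : ∀ z : H, 0 ≤ V z)
    (hsmooth : ContDiff ℝ n V)
    (hbound : ∀ u v : H, ∀ i : ℕ, i ≤ n →
      ‖iteratedFDeriv ℝ i V u - iteratedFDeriv ℝ i V v‖ ≤
        c * ‖u - v‖ *
          (1 + ⨆ r ∈ Set.Icc (0 : ℝ) 1, |V (r • u + (1 - r) • v)|) ^ (1 - 1 / c)) :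
    ∀ i : ℕ, i ≤ n →
      ‖iteratedFDeriv ℝ i V x - iteratedFDeriv ℝ i V y‖ ≤
        c * (2 : ℝ) ^ (c - 1) * ‖x - y‖ * (1 + V x + ‖x - y‖ ^ (c - 1)) := by
  intro i hi
  have hc0 : 0 < c := by linarith
  have hp1 : 1 / c ≤ 1 := by rw [div_le_one hc0]; exact hc
  set d := ‖x - y‖ with hd
  have hd0 : 0 ≤ d := norm_nonneg _
  have hb0 : ∀ u v : H, ∀ M : ℝ, (∀ r ∈ Set.Icc (0 : ℝ) 1, V (r • u + (1 - r) • v) ≤ M) →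
      V u - V v ≤ c * ‖u - v‖ * (1 + M) ^ (1 - 1 / c) := by
    intro u v M hM
    have hM0 : 0 ≤ M := (hV0 _).trans (hM 0 (by simp))
    have h := hbound u v 0 (Nat.zero_le _)
    have e : ‖iteratedFDeriv ℝ 0 V u - iteratedFDeriv ℝ 0 V v‖ = ‖V u - V v‖ := by
      rw [iteratedFDeriv_zero_eq_comp]
      simp only [Function.comp]
      rw [← map_sub, LinearIsometryEquiv.norm_map]
    rw [e, Real.norm_eq_abs] at h
    refine (le_abs_self _).trans (h.trans ?_)
    apply mul_le_mul_of_nonneg_left _ (by positivity)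
    apply Real.rpow_le_rpow
    · linarith [aux_sup_nonneg V u v]
    · linarith [aux_sup_le V hV0 u v M hM0 hM]
    · linarith
  have hVc : Continuous V := hsmooth.continuous
  have hgr := aux_growth c d hc hd0 (fun t => V (x + t • (y - x)))
    (by fun_prop) (fun t => hV0 _) (by
      intro s t M hst hM
      have h := hb0 (x + t • (y - x)) (x + s • (y - x)) M (by
        intro r hr
        have := hM (r * t + (1 - r) * s)
          ⟨by nlinarith [hr.1, hr.2], by nlinarith [hr.1, hr.2]⟩
        convert this using 2
        module)
      have e : ‖x + t • (y - x) - (x + s • (y - x))‖ = d * (t - s) := by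
        rw [show x + t • (y - x) - (x + s • (y - x)) = (t - s) • (y - x) by module,
          norm_smul, Real.norm_eq_abs, abs_of_pos (by linarith), hd, norm_sub_rev y x, mul_comm]
      rw [e] at h
      exact h)
  simp only [zero_smul, add_zero] at hgr
  set a := (1 + V x) ^ (1 / c) with ha
  have h1V : 1 ≤ 1 + V x := by linarith [hV0 x]
  have ha0 : 0 ≤ a := by positivity
  have hpt : ∀ r ∈ Set.Icc (0 : ℝ) 1, V (r • x + (1 - r) • y) ≤ (a + d) ^ c - 1 := by
    intro r hr
    have h := hgr (1 - r) ⟨by linarith [hr.2], by linarith [hr.1]⟩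
    rw [show x + (1 - r) • (y - x) = r • x + (1 - r) • y by module] at h
    have hnn : 0 ≤ 1 + V (r • x + (1 - r) • y) := by linarith [hV0 (r • x + (1 - r) • y)]
    have h' : (1 + V (r • x + (1 - r) • y)) ^ (1 / c) ≤ a + d := by nlinarith [hr.1]
    have h'' := Real.rpow_le_rpow (by positivity) h' hc0.le
    rw [← Real.rpow_mul hnn, one_div_mul_cancel hc0.ne', Real.rpow_one] at h''
    linarith
  have hsup := aux_sup_le V hV0 x y _ ((hV0 _).trans (hpt 0 (by simp))) hpt
  have hsup0 := aux_sup_nonneg V x y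
  refine (hbound x y i hi).trans ?_
  have hmain : (1 + ⨆ r ∈ Set.Icc (0 : ℝ) 1, |V (r • x + (1 - r) • y)|) ^ (1 - 1 / c)
      ≤ (a + d) ^ (c - 1) := by
    calc _ ≤ ((a + d) ^ c) ^ (1 - 1 / c) :=
          Real.rpow_le_rpow (by linarith) (by linarith) (by linarith)
      _ = _ := by
        rw [← Real.rpow_mul (by positivity)]
        congr 1; field_simp
  have hac : a ^ (c - 1) ≤ 1 + V x := by
    rw [ha, ← Real.rpow_mul (by linarith)]
    calc _ ≤ (1 + V x) ^ (1 : ℝ) := by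
          apply Real.rpow_le_rpow_of_exponent_le h1V
          rw [one_div_mul_eq_div, div_le_one hc0]; linarith
      _ = _ := Real.rpow_one _
  have hc1 : 0 ≤ c - 1 := by linarith
  have hfin : (a + d) ^ (c - 1) ≤ 2 ^ (c - 1) * (1 + V x + d ^ (c - 1)) := by
    have hdc : 0 ≤ d ^ (c - 1) := by positivity
    have hac0 : 0 ≤ a ^ (c - 1) := by positivity
    calc (a + d) ^ (c - 1) ≤ (2 * max a d) ^ (c - 1) := by
          apply Real.rpow_le_rpow (by positivity) _ hc1
          linarith [le_max_left a d, le_max_right a d]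
      _ = 2 ^ (c - 1) * (max a d) ^ (c - 1) := Real.mul_rpow (by norm_num) (by positivity)
      _ ≤ _ := by
        apply mul_le_mul_of_nonneg_left _ (by positivity)
        rcases max_choice a d with h | h <;> rw [h] <;> linarith
  calc _ ≤ c * d * (2 ^ (c - 1) * (1 + V x + d ^ (c - 1))) :=
        mul_le_mul_of_nonneg_left (hmain.trans hfin) (by positivity)
    _ = _ := by ring
end

section
/- Let H be a real Hilbert space with more than one element, let c ∈ [1,∞), n ∈ ℕ₀, x ∈ H, and V ∈ 𝒞^{n+1}_c(H,[0,∞)). Then max_{i∈{0,1,…,n}} ‖V^{(i)}(x)‖_{L^{(i)}(H,ℝ)} ≤ c·(1 + V(x)). -/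
/-- Let `H` be a nontrivial real Hilbert space, `c ∈ [1,∞)`, `n ∈ ℕ₀`, `x ∈ H`,
and `V ∈ 𝒞^{n+1}_c(H,[0,∞))`.  Then for every `i ∈ {0,…,n}` it holds that
`‖V⁽ⁱ⁾(x)‖_{L⁽ⁱ⁾(H,ℝ)} ≤ c(1 + V(x))`. -/
theorem stmt7 {H : Type*} [NormedAddCommGroup H] [InnerProductSpace ℝ H]
    [Nontrivial H]
    (c : ℝ) (hc : 1 ≤ c) (n : ℕ) (x : H) (V : H → ℝ)
    (hV0 : ∀ z : H, 0 ≤ V z)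
    (hsmooth : ContDiff ℝ n V)
    (hbound : ∀ u v : H, ∀ i : ℕ, i ≤ n →
      ‖iteratedFDeriv ℝ i V u - iteratedFDeriv ℝ i V v‖ ≤
        c * ‖u - v‖ *
          (1 + ⨆ r ∈ Set.Icc (0 : ℝ) 1, |V (r • u + (1 - r) • v)|) ^ (1 - 1 / c)) :
    ∀ i : ℕ, i ≤ n → ‖iteratedFDeriv ℝ i V x‖ ≤ c * (1 + V x) := by
  intro i hi
  rcases i with _ | k
  · rw [norm_iteratedFDeriv_zero, Real.norm_eq_abs, abs_of_nonneg (hV0 x)]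
    nlinarith [hV0 x]
  · have hcont : Continuous V := hsmooth.continuous
    have key : ∀ ε : ℝ, 0 < ε → ‖iteratedFDeriv ℝ (k + 1) V x‖ ≤ c * (1 + V x) + ε := by
      intro ε hε
      have hc0 : 0 < c := by linarith
      set δ : ℝ := ε / c with hδ
      have hδ0 : 0 < δ := by positivity
      have hcδ : c * δ = ε := by rw [hδ]; field_simp
      have hev : ∀ᶠ z in nhds x, V z < V x + δ :=
        hcont.continuousAt.eventually_lt continuousAt_const (by linarith)
      obtain ⟨ρ, hρ, hball⟩ := Metric.eventually_nhds_iff_ball.1 hev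
      have hx0 := hV0 x
      rw [← norm_fderiv_iteratedFDeriv]
      apply norm_fderiv_le_of_lip' ℝ (by positivity)
      filter_upwards [Metric.ball_mem_nhds x hρ] with u hu
      refine (hbound u x k (by omega)).trans ?_
      set S : ℝ := ⨆ r ∈ Set.Icc (0 : ℝ) 1, |V (r • u + (1 - r) • x)| with hS
      have hS0 : 0 ≤ S :=
        Real.iSup_nonneg fun r => Real.iSup_nonneg fun _ => abs_nonneg _
      have hS1 : S ≤ V x + δ := by
        refine Real.iSup_le (fun r => Real.iSup_le (fun hr => ?_) (by positivity)) (by positivity)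
        rw [abs_of_nonneg (hV0 _)]
        refine (hball _ ?_).le
        exact (convex_ball x ρ) hu (Metric.mem_ball_self hρ) hr.1 (by linarith [hr.2]) (by ring)
      have hp : (1 + S) ^ (1 - 1 / c) ≤ 1 + S := by
        calc (1 + S) ^ (1 - 1 / c) ≤ (1 + S) ^ (1 : ℝ) :=
              Real.rpow_le_rpow_of_exponent_le (by linarith)
                (by have : 0 < 1 / c := by positivity
                    linarith)
          _ = 1 + S := Real.rpow_one _
      calc c * ‖u - x‖ * (1 + S) ^ (1 - 1 / c) ≤ c * ‖u - x‖ * (1 + (V x + δ)) := by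
            gcongr; linarith
        _ = (c * (1 + V x) + c * δ) * ‖u - x‖ := by ring
        _ = _ := by rw [hcδ]
    exact le_of_forall_pos_le_add key
end
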